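/- Let G_N denote the set of labelled cubic multigraphs on the vertex set Fin N, and let Ω_N be the set of perfect matchings of a 3N-element set, so |Ω_N| = (3N)!/(2^{3N/2}·(3N/2)!). Then |G_N| ∼ e²·|Ω_N|/6^N as N → ∞ through even values of N; that is, |G_N|·6^N/(e²·|Ω_N|) → 1. -/

import Mathlib

open Filter Real Topology

/-- `Omega N`: the perfect matchings of the `3N` half-edges, i.e. fixed-point-free
involutions of `Fin (3N)`. -/
def Omega (N : ℕ) : Type := {ω : Equiv.Perm (Fin (3 * N)) // ∀ a, ω (ω a) = a ∧ ω a ≠ a}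

instance (N : ℕ) : Fintype (Omega N) := by unfold Omega; exact Subtype.fintype _

/-- The block (vertex) containing a half-edge: `B_v = {3v, 3v+1, 3v+2}`. -/
def blk {N : ℕ} (a : Fin (3 * N)) : Fin N := ⟨a.val / 3, by have := a.isLt; omega⟩

/-- The multiplicity of the pair of blocks `{u, v}` in the multigraph `Γ(ω)`:
for `u ≠ v` the number of half-edges in `B_u` matched into `B_v`; for `u = v`
the number of matched pairs contained in `B_u` (loops at `u`). -/
noncomputable def mult {N : ℕ} (ω : Omega N) (u v : Fin N) : ℕ :=
  if u = v then Nat.card {a : Fin (3 * N) // blk a = u ∧ blk (ω.val a) = u} / 2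
  else Nat.card {a : Fin (3 * N) // blk a = u ∧ blk (ω.val a) = v}

/-- A cubic multigraph on `Fin N`: a symmetric multiplicity function, where `m u u`
counts loops at `u` (each contributing 2 to the degree) and `m u v` (for `u ≠ v`)
counts edges between `u` and `v`, such that every vertex has degree 3. -/
def IsCubic {N : ℕ} (m : Fin N → Fin N → ℕ) : Prop :=
  (∀ u v, m u v = m v u) ∧ ∀ u, 2 * m u u + ∑ v ∈ Finset.univ.erase u, m u v = 3

/-! Removing the half-edges at a vertex gives a recurrence for the number of multigraphs with a
prescribed degree sequence `d`. Gaussian integration by parts gives the same recurrence for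
`E ∏ v, f (d v)`, where the `X k` are independent centred Gaussians of variance `k` and `f n` is
the cycle index of the symmetric group `Sₙ` evaluated at `X k + [2 ∣ k]`; hence both agree. For
cubic multigraphs this yields `6 ^ N |G_N| = E (X₁³ + 3 X₁ + 3 X₁ X₂ + 2 X₃) ^ N`, while
`|Ω_N| = E X₁ ^ (3 N)`.

In the expansion of the `N`-th power, exchanging a factor `X₁³` for `X₁` or `X₁ X₂` costs two of the
`3 N` half-edges but can be done in about `N` ways, so it changes the normalised moment by a factor
tending to `1 / 3`, and pairs of factors `X₃` become negligible. Dominated convergence then gives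
`6 ^ N |G_N| / |Ω_N| → E exp (X₂ + 1) = e²`. -/

section FixedPointFreeInvolutions

variable {α : Type*} [Fintype α]

lemma cycleType_eq_replicate_two_iff [DecidableEq α] {M : ℕ} (hα : Fintype.card α = 2 * M)
    (ω : Equiv.Perm α) :
    ω.cycleType = Multiset.replicate M 2 ↔ ∀ a, ω (ω a) = a ∧ ω a ≠ a := by
  have card_support : ω.cycleType.sum = ω.support.card := ω.sum_cycleType
  constructor
  · intro hω
    have support_univ : ω.support = Finset.univ := by
      rw [hω, Multiset.sum_replicate, smul_eq_mul, mul_comm, ← hα] at card_support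
      exact Finset.eq_univ_of_card _ card_support.symm
    have sq_eq_one : ω ^ 2 = 1 := by
      rw [← orderOf_dvd_iff_pow_eq_one, ← Equiv.Perm.lcm_cycleType, hω, Multiset.lcm_dvd]
      exact fun b hb ↦ (Multiset.eq_of_mem_replicate hb).dvd
    exact fun a ↦ ⟨by simpa [pow_two] using congr($sq_eq_one a),
      Equiv.Perm.mem_support.1 (support_univ ▸ Finset.mem_univ a)⟩
  · intro hω
    have support_univ : ω.support = Finset.univ := by
      ext a
      simp [(hω a).2]
    have sq_eq_one : ω ^ 2 = 1 := by
      ext a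
      simp [pow_two, (hω a).1]
    have cycleType_eq := Equiv.Perm.cycleType_of_pow_prime_eq_one sq_eq_one
    rw [cycleType_eq, support_univ, Finset.card_univ, hα, Multiset.sum_replicate,
      smul_eq_mul] at card_support
    rw [cycleType_eq]
    congr 1
    lia

lemma card_fixedPointFree_involutions_mul {M : ℕ} (hα : Fintype.card α = 2 * M) :
    Nat.card {ω : Equiv.Perm α // ∀ a, ω (ω a) = a ∧ ω a ≠ a} * (2 ^ M * M.factorial) =
      (2 * M).factorial := by
  classical
  have card_eq : Nat.card {ω : Equiv.Perm α // ∀ a, ω (ω a) = a ∧ ω a ≠ a} =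
      ({ω | ω.cycleType = Multiset.replicate M 2} : Finset (Equiv.Perm α)).card := by
    simp only [Nat.card_eq_fintype_card, Fintype.card_subtype,
      cycleType_eq_replicate_two_iff hα]
  have centralizer := Equiv.Perm.card_of_cycleType_mul_eq α (Multiset.replicate M 2)
  rw [if_pos ⟨by simp [hα, mul_comm], fun a ha ↦ (Multiset.eq_of_mem_replicate ha).ge⟩]
    at centralizer
  rw [card_eq, ← hα, ← centralizer]
  rcases M.eq_zero_or_pos with rfl | hM
  · simp [hα]
  · simp [hα, Multiset.toFinset_replicate, hM.ne', mul_comm]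

end FixedPointFreeInvolutions

section VectorPartitions

variable {ι V : Type*} [Fintype ι] {a : ι → V → ℤ}

/-- The ways of writing the vector `d` as a nonnegative integer combination of the vectors `a i`.
Integer vectors are used so that subtraction is honest: a `d` with a negative entry has no such
representation when the `a i` are nonnegative. -/
def vectorPartitions (a : ι → V → ℤ) (d : V → ℤ) : Set (ι → ℕ) :=
  {m | ∑ i, m i • a i = d}

lemma mem_vectorPartitions {d : V → ℤ} {m : ι → ℕ} :
    m ∈ vectorPartitions a d ↔ ∑ i, m i • a i = d :=
  Iff.rfl

lemma mul_le_of_mem_vectorPartitions (ha : 0 ≤ a) {d : V → ℤ} {m : ι → ℕ}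
    (hm : m ∈ vectorPartitions a d) (i : ι) (v : V) : m i * a i v ≤ d v := by
  rw [← mem_vectorPartitions.1 hm, Finset.sum_apply]
  simpa using Finset.single_le_sum (f := fun i ↦ m i • a i v)
    (fun j _ ↦ nsmul_nonneg (ha j v) _) (Finset.mem_univ i)

lemma vectorPartitions_eq_empty (ha : 0 ≤ a) {d : V → ℤ} {v : V} (hv : d v < 0) :
    vectorPartitions a d = ∅ := by
  refine Set.eq_empty_iff_forall_notMem.2 fun m hm ↦ hv.not_ge ?_
  rw [← mem_vectorPartitions.1 hm]
  exact (Finset.sum_nonneg fun i _ ↦ nsmul_nonneg (ha i) _) v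

lemma vectorPartitions_zero (ha : ∀ i, 0 < a i) : vectorPartitions a 0 = {0} := by
  refine Set.eq_singleton_iff_unique_mem.2 ⟨by simp [mem_vectorPartitions], fun m hm ↦ ?_⟩
  ext i
  obtain ⟨v, hv⟩ := (Pi.lt_def.1 (ha i)).2
  have := mul_le_of_mem_vectorPartitions (fun i ↦ (ha i).le) hm i v
  simp only [Pi.zero_apply] at this hv ⊢
  nlinarith

lemma finite_vectorPartitions (ha : ∀ i, 0 < a i) (d : V → ℤ) :
    (vectorPartitions a d).Finite := by
  choose w hw using fun i ↦ (Pi.lt_def.1 (ha i)).2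
  classical
  refine (Set.finite_Icc 0 fun i ↦ (d (w i)).toNat).subset fun m hm ↦ ⟨zero_le, fun i ↦ ?_⟩
  have := mul_le_of_mem_vectorPartitions (fun i ↦ (ha i).le) hm i (w i)
  have : (m i : ℤ) ≤ m i * a i (w i) := le_mul_of_one_le_right (by positivity) (hw i)
  lia

lemma ncard_setOf_le_vectorPartitions (d : V → ℤ) (i : ι) (k : ℕ) :
    {m ∈ vectorPartitions a d | k ≤ m i}.ncard = (vectorPartitions a (d - k • a i)).ncard := by
  classical
  have sum_single : ∑ j, (Pi.single i k : ι → ℕ) j • a j = k • a i := by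
    simp [Pi.single_apply]
  rw [← Set.ncard_image_of_injective (vectorPartitions a (d - k • a i))
    (add_left_injective (Pi.single i k))]
  congr 1
  ext m
  simp only [Set.mem_image, Set.mem_ofPred_eq, mem_vectorPartitions]
  constructor
  · rintro ⟨hm, hk⟩
    have single_le : Pi.single i k ≤ m := update_le_iff.2 ⟨hk, fun _ _ ↦ zero_le⟩
    refine ⟨m - Pi.single i k, ?_, tsub_add_cancel_of_le single_le⟩
    rw [eq_sub_iff_add_eq, ← sum_single, ← Finset.sum_add_distrib, ← hm]
    refine Finset.sum_congr rfl fun j _ ↦ ?_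
    rw [← add_smul, ← Pi.add_apply, tsub_add_cancel_of_le single_le]
  · rintro ⟨m, hm, rfl⟩
    simp only [Pi.add_apply, add_smul, Finset.sum_add_distrib, hm, sum_single, sub_add_cancel,
      Pi.single_eq_same, le_add_iff_nonneg_left, zero_le, and_self]

lemma sum_eq_sum_card_filter_le {β : Type*} (S : Finset β) (f : β → ℕ) {K : ℕ}
    (hK : ∀ b ∈ S, f b ≤ K) :
    ∑ b ∈ S, f b = ∑ k ∈ Finset.Icc 1 K, (S.filter fun b ↦ k ≤ f b).card := by
  simp only [Finset.card_filter]
  rw [Finset.sum_comm]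
  refine Finset.sum_congr rfl fun b hb ↦ ?_
  have parts_le : (Finset.Icc 1 K).filter (· ≤ f b) = Finset.Icc 1 (f b) := by
    ext k
    have := hK b hb
    simp only [Finset.mem_filter, Finset.mem_Icc]
    lia
  rw [← Finset.card_filter, parts_le, Nat.card_Icc, Nat.add_sub_cancel]

/-- Counting the pairs (a representation of `d`, a part through `v`) extends
Euler's recurrence `n p(n) = ∑ σ(k) p(n - k)` from partitions of integers. -/
lemma mul_ncard_vectorPartitions (ha : ∀ i, 0 < a i) (d : V → ℤ) (v : V) {K : ℕ} (hK : d v ≤ K) :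
    d v * (vectorPartitions a d).ncard = ∑ k ∈ Finset.Icc 1 K, ∑ i,
      a i v * (vectorPartitions a (d - k • a i)).ncard := by
  classical
  have parts (i : ι) : a i v * ∑ m ∈ (finite_vectorPartitions ha d).toFinset, (m i : ℤ) =
      ∑ k ∈ Finset.Icc 1 K, a i v * (vectorPartitions a (d - k • a i)).ncard := by
    rcases (show 0 ≤ a i v from (ha i).le v).eq_or_lt with h0 | hpos
    · simp [← h0]
    · rw [← Finset.mul_sum, ← Nat.cast_sum, sum_eq_sum_card_filter_le (K := K), Nat.cast_sum]
      · simp_rw [← ncard_setOf_le_vectorPartitions d i, ← Set.ncard_coe_finset,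
          Finset.coe_filter, Set.Finite.mem_toFinset]
      · intro m hm
        rw [Set.Finite.mem_toFinset] at hm
        have := mul_le_of_mem_vectorPartitions (fun i ↦ (ha i).le) hm i v
        nlinarith
  calc d v * (vectorPartitions a d).ncard
      = ∑ m ∈ (finite_vectorPartitions ha d).toFinset, ∑ i, m i * a i v := by
        rw [Set.ncard_eq_toFinset_card _ (finite_vectorPartitions ha d), mul_comm, ← nsmul_eq_mul,
          ← Finset.sum_const]
        refine Finset.sum_congr rfl fun m hm ↦ ?_
        rw [← (Set.Finite.mem_toFinset _).1 hm]
        simp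
    _ = ∑ i, a i v * ∑ m ∈ (finite_vectorPartitions ha d).toFinset, (m i : ℤ) := by
        rw [Finset.sum_comm]
        simp_rw [Finset.mul_sum, mul_comm]
    _ = _ := by
        rw [Finset.sum_comm]
        simp_rw [parts]

end VectorPartitions

section DegreeSequences

variable {V : Type*} [DecidableEq V]

/-- The vector recording how often each vertex is an end of the edge `e`: a loop contributes `2` at
its vertex. A multigraph, as a multiplicity function `m : Sym2 V → ℕ`, has degree sequence
`∑ e, m e • edgeEnds e`. -/
def edgeEnds (e : Sym2 V) : V → ℤ :=
  Sym2.lift ⟨fun x y ↦ Pi.single x 1 + Pi.single y 1, fun _ _ ↦ add_comm _ _⟩ e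

lemma edgeEnds_pos (e : Sym2 V) : 0 < edgeEnds e := by
  induction e with | _ x y =>
  exact add_pos_of_pos_of_nonneg (by simp) (by simp)

variable [Fintype V]

lemma sum_edgeEnds_mul (u : V) (g : Sym2 V → ℤ) :
    ∑ e, edgeEnds e u * g e = g s(u, u) + ∑ v, g s(u, v) := by
  have ends_eq (e : Sym2 V) :
      edgeEnds e u = (if s(u, u) = e then 1 else 0) + ∑ v, if s(u, v) = e then 1 else 0 := by
    induction e with | _ x y =>
    rcases eq_or_ne u x with rfl | hx
    · simp only [Sym2.congr_right]
      simp [edgeEnds, Pi.single_apply, add_comm]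
    rcases eq_or_ne u y with rfl | hy
    · simp [edgeEnds, hx, Sym2.eq_swap (a := x)]
    · simp [edgeEnds, hx, hy]
  simp_rw [ends_eq, add_mul, Finset.sum_add_distrib, Finset.sum_mul]
  rw [Finset.sum_comm]
  simp

/-- The number of multigraphs on `V`, loops and multiple edges allowed, with degree sequence `d`. -/
noncomputable def multigraphCount (d : V → ℤ) : ℕ :=
  (vectorPartitions edgeEnds d).ncard

/-- Each multigraph is counted once per half-edge at `u`. -/
lemma mul_multigraphCount (d : V → ℤ) (u : V) {K : ℕ} (hK : d u ≤ K) :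
    d u * multigraphCount d = ∑ k ∈ Finset.Icc 1 K,
      (multigraphCount (d - Pi.single u (2 * k : ℤ)) +
        ∑ v, multigraphCount (d - Pi.single u (k : ℤ) - Pi.single v (k : ℤ)) : ℤ) := by
  have nsmul_edgeEnds (k : ℕ) (v : V) :
      k • edgeEnds s(u, v) = Pi.single u (k : ℤ) + Pi.single v (k : ℤ) := by
    simp [edgeEnds, ← Pi.single_smul']
  rw [multigraphCount, mul_ncard_vectorPartitions edgeEnds_pos d u hK]
  refine Finset.sum_congr rfl fun k _ ↦ ?_
  have := sum_edgeEnds_mul u fun e ↦ (multigraphCount (d - k • edgeEnds e) : ℤ)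
  simp only [multigraphCount, nsmul_edgeEnds] at this ⊢
  rw [this]
  simp only [two_mul, Pi.single_add, sub_sub, Nat.cast_sum]

lemma multigraphCount_eq_zero {d : V → ℤ} {v : V} (hv : d v < 0) : multigraphCount d = 0 := by
  rw [multigraphCount, vectorPartitions_eq_empty (fun e ↦ (edgeEnds_pos e).le) hv, Set.ncard_empty]

lemma multigraphCount_zero : multigraphCount (0 : V → ℤ) = 1 := by
  rw [multigraphCount, vectorPartitions_zero edgeEnds_pos, Set.ncard_singleton]

lemma isCubic_mk_iff {N : ℕ} (m : Sym2 (Fin N) → ℕ) :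
    IsCubic (fun u v ↦ m s(u, v)) ↔ m ∈ vectorPartitions edgeEnds fun _ ↦ 3 := by
  have degree_eq (u : Fin N) : (∑ e, m e • edgeEnds e) u =
      ((2 * m s(u, u) + ∑ v ∈ Finset.univ.erase u, m s(u, v) : ℕ) : ℤ) := by
    have := sum_edgeEnds_mul u fun e ↦ (m e : ℤ)
    rw [← Finset.add_sum_erase _ _ (Finset.mem_univ u), ← add_assoc, ← two_mul] at this
    simpa [mul_comm] using this
  simp only [IsCubic, mem_vectorPartitions, funext_iff, degree_eq]
  exact ⟨fun h u ↦ mod_cast h.2 u,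
    fun h ↦ ⟨fun u v ↦ by rw [Sym2.eq_swap], fun u ↦ mod_cast h u⟩⟩

lemma card_isCubic (N : ℕ) :
    Nat.card {m : Fin N → Fin N → ℕ // IsCubic m} = multigraphCount fun _ : Fin N ↦ 3 := by
  let toMatrix (m : Sym2 (Fin N) → ℕ) (u v : Fin N) : ℕ := m s(u, v)
  have toMatrix_injective : Function.Injective toMatrix := fun m m' h ↦
    funext <| Sym2.ind fun u v ↦ congrFun₂ h u v
  have image_toMatrix :
      toMatrix '' vectorPartitions edgeEnds (fun _ ↦ 3) = {m | IsCubic m} := by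
    ext m
    constructor
    · rintro ⟨m, hm, rfl⟩
      exact (isCubic_mk_iff m).2 hm
    · intro hm
      exact ⟨Sym2.lift ⟨m, hm.1⟩, (isCubic_mk_iff _).1 hm, rfl⟩
  rw [multigraphCount, ← Set.ncard_image_of_injective _ toMatrix_injective, image_toMatrix]
  rfl

end DegreeSequences

section GaussianExpectation

variable {R : Type*} [CommSemiring R]

/-- The moments of a centred Gaussian variable with variance `v`, over any commutative semiring. -/
def gaussianMoment (v : R) : ℕ → R
  | 0 => 1
  | 1 => 0
  | n + 2 => v * (n + 1) * gaussianMoment v n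

lemma gaussianMoment_succ (v : R) (n : ℕ) :
    gaussianMoment v (n + 1) = v * (n * gaussianMoment v (n - 1)) := by
  cases n with
  | zero => simp [gaussianMoment]
  | succ n =>
    rw [gaussianMoment, Nat.add_sub_cancel]
    push_cast
    ring

variable {σ : Type*} (v : σ → R)

/-- The expectation of a polynomial in independent centred Gaussian variables `X i` of variance
`v i`, as an algebraic functional over any commutative semiring. -/
noncomputable def gaussianExpectation : MvPolynomial σ R →ₗ[R] R :=
  (MvPolynomial.basisMonomials σ R).constr R fun s ↦ s.prod fun i n ↦ gaussianMoment (v i) n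

lemma gaussianExpectation_monomial (s : σ →₀ ℕ) (r : R) :
    gaussianExpectation v (MvPolynomial.monomial s r) =
      r * s.prod fun i n ↦ gaussianMoment (v i) n := by
  have unit_coeff := (MvPolynomial.basisMonomials σ R).constr_basis R
    (fun s ↦ s.prod fun i n ↦ gaussianMoment (v i) n) s
  rw [MvPolynomial.coe_basisMonomials] at unit_coeff
  rw [← mul_one r, ← smul_eq_mul, ← MvPolynomial.smul_monomial, map_smul, gaussianExpectation,
    unit_coeff, smul_eq_mul, smul_eq_mul, mul_one]

lemma gaussianExpectation_prod_X_pow (s : Finset σ) (n : σ → ℕ) :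
    gaussianExpectation v (∏ i ∈ s, MvPolynomial.X i ^ n i) =
      ∏ i ∈ s, gaussianMoment (v i) (n i) := by
  have support_subset := Finsupp.support_indicator_subset s fun i _ ↦ n i
  have prod_eq_monomial : ∏ i ∈ s, MvPolynomial.X i ^ n i =
      MvPolynomial.monomial (Finsupp.indicator s fun i _ ↦ n i) (1 : R) := by
    rw [MvPolynomial.monomial_eq, MvPolynomial.C_1, one_mul,
      Finsupp.prod_of_support_subset _ support_subset _ fun _ _ ↦ pow_zero _]
    exact Finset.prod_congr rfl fun i hi ↦ by rw [Finsupp.indicator_of_mem hi]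
  rw [prod_eq_monomial, gaussianExpectation_monomial, one_mul,
    Finsupp.prod_of_support_subset _ support_subset _ fun _ _ ↦ rfl]
  exact Finset.prod_congr rfl fun i hi ↦ by rw [Finsupp.indicator_of_mem hi]

lemma gaussianExpectation_one : gaussianExpectation v 1 = 1 := by
  rw [← MvPolynomial.C_1, MvPolynomial.C_apply, gaussianExpectation_monomial,
    Finsupp.prod_zero_index, mul_one]

/-- Gaussian integration by parts. -/
lemma gaussianExpectation_X_mul (i : σ) (F : MvPolynomial σ R) :
    gaussianExpectation v (MvPolynomial.X i * F) =
      v i * gaussianExpectation v (MvPolynomial.pderiv i F) := by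
  classical
  induction F using MvPolynomial.induction_on' with
  | add F G hF hG => simp only [mul_add, map_add, hF, hG]
  | monomial s r =>
    have prod_split (t : σ →₀ ℕ) : (t.prod fun i n ↦ gaussianMoment (v i) n) =
        gaussianMoment (v i) (t i) * (t.erase i).prod fun i n ↦ gaussianMoment (v i) n :=
      (Finsupp.mul_prod_erase' t i _ fun _ ↦ rfl).symm
    have erase_add : (Finsupp.single i 1 + s).erase i = s.erase i := by
      simp [Finsupp.erase_add]
    have erase_sub : (s - Finsupp.single i 1).erase i = s.erase i := by
      ext j
      rcases eq_or_ne j i with rfl | hj <;> simp [*]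
    rw [MvPolynomial.X, MvPolynomial.monomial_mul, one_mul, MvPolynomial.pderiv_monomial,
      gaussianExpectation_monomial, gaussianExpectation_monomial, prod_split, erase_add,
      prod_split (s - _), erase_sub, Finsupp.add_apply, Finsupp.single_eq_same, add_comm 1,
      gaussianMoment_succ, Finsupp.tsub_apply, Finsupp.single_eq_same]
    ring

end GaussianExpectation

section VertexPolynomials

open MvPolynomial

lemma derivation_prod {R A ι : Type*} [CommSemiring R] [CommSemiring A] [Algebra R A]
    [DecidableEq ι] (D : Derivation R A A) (s : Finset ι) (f : ι → A) :
    D (∏ i ∈ s, f i) = ∑ i ∈ s, (∏ j ∈ s.erase i, f j) * D (f i) := by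
  induction s using Finset.induction_on with
  | empty => simp
  | insert i s hi ih =>
    have prod_erase (j : ι) (hj : j ∈ s) :
        ∏ l ∈ (insert i s).erase j, f l = f i * ∏ l ∈ s.erase j, f l := by
      rw [Finset.erase_insert_of_ne (by grind), Finset.prod_insert (by grind)]
    rw [Finset.prod_insert hi, D.leibniz, ih, Finset.sum_insert hi, Finset.erase_insert hi,
      smul_eq_mul, smul_eq_mul, Finset.mul_sum, add_comm]
    congr 1
    refine Finset.sum_congr rfl fun j hj ↦ ?_
    rw [prod_erase j hj, mul_assoc]

/-- The weight of a vertex of degree `n`: the cycle index of `Sₙ` (equivalently, the complete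
homogeneous symmetric polynomial as a polynomial in power sums) evaluated at `X k + [2 ∣ k]`.
It is defined by Newton's identities, and is zero for `n < 0`. -/
noncomputable def vertexPolynomial (n : ℤ) : MvPolynomial ℕ ℝ :=
  if n < 0 then 0 else if n = 0 then 1 else
    C (n : ℝ)⁻¹ * ∑ k ∈ (Finset.Icc 1 n.toNat).attach,
      (X k.1 * vertexPolynomial (n - k) + vertexPolynomial (n - 2 * k))
termination_by n.toNat
decreasing_by all_goals (have := Finset.mem_Icc.1 k.2; omega)

lemma vertexPolynomial_of_neg {n : ℤ} (hn : n < 0) : vertexPolynomial n = 0 := by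
  rw [vertexPolynomial, if_pos hn]

lemma vertexPolynomial_zero : vertexPolynomial 0 = 1 := by
  rw [vertexPolynomial, if_neg (lt_irrefl 0), if_pos rfl]

lemma mul_vertexPolynomial {n : ℤ} {K : ℕ} (hK : n ≤ K) :
    n • vertexPolynomial n = ∑ k ∈ Finset.Icc 1 K,
      (X k * vertexPolynomial (n - k) + vertexPolynomial (n - 2 * k)) := by
  have truncate : ∑ k ∈ Finset.Icc 1 n.toNat,
      (X k * vertexPolynomial (n - k) + vertexPolynomial (n - 2 * k)) = ∑ k ∈ Finset.Icc 1 K,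
      (X k * vertexPolynomial (n - k) + vertexPolynomial (n - 2 * k)) := by
    refine Finset.sum_subset (Finset.Icc_subset_Icc_right (by lia)) fun k hk hkn ↦ ?_
    rw [Finset.mem_Icc] at hk hkn
    rw [vertexPolynomial_of_neg (by lia), vertexPolynomial_of_neg (by lia), mul_zero, add_zero]
  rw [← truncate]
  rcases lt_trichotomy n 0 with hn | rfl | hn
  · simp [vertexPolynomial_of_neg hn, Int.toNat_of_nonpos hn.le]
  · simp
  · rw [vertexPolynomial, if_neg hn.not_gt, if_neg hn.ne', zsmul_eq_mul, ← mul_assoc,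
      ← map_intCast (C (σ := ℕ) (R := ℝ)) n, ← C_mul,
      mul_inv_cancel₀ (Int.cast_ne_zero.2 hn.ne'), C_1, one_mul,
      Finset.sum_attach _ fun k : ℕ ↦
        X k * vertexPolynomial (n - k) + vertexPolynomial (n - 2 * k)]

/-- Up to the factor `k`, differentiating in `X k` removes `k` half-edges from the vertex. -/
lemma smul_pderiv_vertexPolynomial {k : ℕ} (hk : 0 < k) (n : ℤ) :
    k • pderiv k (vertexPolynomial n) = vertexPolynomial (n - k) := by
  induction hm : n.toNat using Nat.strong_induction_on generalizing n with | _ m ih =>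
  subst hm
  rcases lt_trichotomy n 0 with hn | rfl | hn
  · simp [vertexPolynomial_of_neg, hn, show n - k < 0 by lia]
  · simp [vertexPolynomial_zero, vertexPolynomial_of_neg, hk]
  have removed (j : ℕ) (hj : j ∈ Finset.Icc 1 (n.toNat + k)) :
      k • pderiv k (X j * vertexPolynomial (n - j) + vertexPolynomial (n - 2 * j)) =
        (if k = j then k • vertexPolynomial (n - j) else 0) +
          (X j * vertexPolynomial (n - k - j) + vertexPolynomial (n - k - 2 * j)) := by
    rw [Finset.mem_Icc] at hj
    rw [map_add, pderiv_mul, pderiv_X, sub_right_comm, sub_right_comm n (k : ℤ),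
      ← ih _ (by lia) (n - j) rfl, ← ih _ (by lia) (n - 2 * j) rfl]
    split_ifs with h
    · subst h
      simp only [Pi.single_eq_same, one_mul, smul_add, mul_smul_comm, add_assoc]
    · simp only [Pi.single_eq_of_ne' h, zero_mul, zero_add, smul_add, mul_smul_comm]
  refine smul_right_injective _ hn.ne' ?_
  calc n • k • pderiv k (vertexPolynomial n)
      = k • pderiv k (n • vertexPolynomial n) := by rw [map_zsmul, smul_comm]
    _ = k • vertexPolynomial (n - k) + (n - k) • vertexPolynomial (n - k) := by
        rw [mul_vertexPolynomial (K := n.toNat + k) (by lia),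
          mul_vertexPolynomial (K := n.toNat + k) (by lia), map_sum, Finset.smul_sum,
          Finset.sum_congr rfl removed, Finset.sum_add_distrib, Finset.sum_ite_eq,
          if_pos (Finset.mem_Icc.2 ⟨hk, Nat.le_add_left k _⟩)]
    _ = n • vertexPolynomial (n - k) := by
        rw [← natCast_zsmul, ← add_smul, add_sub_cancel]

variable {V : Type*} [Fintype V]

/-- The weight of a degree sequence, whose Gaussian expectation counts multigraphs. -/
noncomputable def degreePolynomial (d : V → ℤ) : MvPolynomial ℕ ℝ :=
  ∏ v, vertexPolynomial (d v)

variable [DecidableEq V]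

lemma degreePolynomial_sub_single (d : V → ℤ) (v : V) (k : ℤ) :
    degreePolynomial (d - Pi.single v k) =
      vertexPolynomial (d v - k) * ∏ u ∈ Finset.univ.erase v, vertexPolynomial (d u) := by
  rw [degreePolynomial, ← Finset.mul_prod_erase _ _ (Finset.mem_univ v), Pi.sub_apply,
    Pi.single_eq_same]
  congr 1
  refine Finset.prod_congr rfl fun u hu ↦ ?_
  rw [Pi.sub_apply, Pi.single_eq_of_ne (Finset.ne_of_mem_erase hu), sub_zero]

lemma smul_degreePolynomial (d : V → ℤ) (u : V) {K : ℕ} (hK : d u ≤ K) :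
    d u • degreePolynomial d = ∑ k ∈ Finset.Icc 1 K,
      (X k * degreePolynomial (d - Pi.single u (k : ℤ)) +
        degreePolynomial (d - Pi.single u (2 * k : ℤ))) := by
  simp_rw [degreePolynomial_sub_single, ← mul_assoc, ← add_mul]
  rw [← Finset.sum_mul, ← mul_vertexPolynomial hK, smul_mul_assoc, degreePolynomial,
    Finset.mul_prod_erase _ (fun v ↦ vertexPolynomial (d v)) (Finset.mem_univ u)]

lemma smul_pderiv_degreePolynomial {k : ℕ} (hk : 0 < k) (d : V → ℤ) :
    k • pderiv k (degreePolynomial d) = ∑ v, degreePolynomial (d - Pi.single v (k : ℤ)) := by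
  rw [degreePolynomial, derivation_prod, Finset.smul_sum]
  refine Finset.sum_congr rfl fun v _ ↦ ?_
  rw [degreePolynomial_sub_single, ← mul_smul_comm, smul_pderiv_vertexPolynomial hk, mul_comm]

lemma mul_gaussianExpectation_degreePolynomial (d : V → ℤ) (u : V) {K : ℕ} (hK : d u ≤ K) :
    d u * gaussianExpectation (Nat.cast : ℕ → ℝ) (degreePolynomial d) = ∑ k ∈ Finset.Icc 1 K,
      (gaussianExpectation Nat.cast (degreePolynomial (d - Pi.single u (2 * k : ℤ))) +
        ∑ v, gaussianExpectation Nat.cast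
          (degreePolynomial (d - Pi.single u (k : ℤ) - Pi.single v (k : ℤ)))) := by
  rw [← zsmul_eq_mul, ← map_zsmul, smul_degreePolynomial d u hK, map_sum]
  refine Finset.sum_congr rfl fun k hk ↦ ?_
  rw [map_add, gaussianExpectation_X_mul, ← nsmul_eq_mul, ← map_nsmul,
    smul_pderiv_degreePolynomial (Finset.mem_Icc.1 hk).1, map_sum, add_comm]

/-- Both sides satisfy the same recurrence, which removes half-edges at a vertex. -/
theorem multigraphCount_eq_gaussianExpectation (d : V → ℤ) :
    multigraphCount d = gaussianExpectation (Nat.cast : ℕ → ℝ) (degreePolynomial d) := by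
  induction hm : (∑ v, d v).toNat using Nat.strong_induction_on generalizing d with | _ m ih =>
  subst hm
  by_cases exists_neg : ∃ v, d v < 0
  · obtain ⟨v, hv⟩ := exists_neg
    rw [multigraphCount_eq_zero hv, degreePolynomial,
      Finset.prod_eq_zero (Finset.mem_univ v) (vertexPolynomial_of_neg hv), map_zero, Nat.cast_zero]
  push Not at exists_neg
  rcases eq_or_ne d 0 with rfl | hd
  · simp [multigraphCount_zero, degreePolynomial, vertexPolynomial_zero, gaussianExpectation_one]
  obtain ⟨u, hu⟩ := Function.ne_iff.1 hd
  have sum_pos : 0 < ∑ v, d v :=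
    Finset.sum_pos' (fun v _ ↦ exists_neg v) ⟨u, Finset.mem_univ u, hu.symm.lt_of_le (exists_neg u)⟩
  have recurrence :=
    congrArg (Int.cast : ℤ → ℝ) (mul_multigraphCount d u (Int.self_le_toNat (d u)))
  push_cast at recurrence
  refine mul_left_cancel₀ (Int.cast_ne_zero.2 hu) ?_
  rw [mul_gaussianExpectation_degreePolynomial d u (Int.self_le_toNat (d u)), recurrence]
  have sum_sub_single (d : V → ℤ) (v : V) (k : ℤ) :
      ∑ w, (d - Pi.single v k : V → ℤ) w = ∑ w, d w - k := by
    simp [Finset.sum_sub_distrib]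
  refine Finset.sum_congr rfl fun k hk ↦ ?_
  rw [Finset.mem_Icc] at hk
  congr 1
  · refine ih _ ?_ _ rfl
    rw [sum_sub_single]
    lia
  · refine Finset.sum_congr rfl fun v _ ↦ ih _ ?_ _ rfl
    rw [sum_sub_single, sum_sub_single]
    lia

end VertexPolynomials

section GaussianMoments

lemma gaussianMoment_two_mul_mul {R : Type*} [CommSemiring R] (v : R) (M : ℕ) :
    gaussianMoment v (2 * M) * (2 ^ M * M.factorial) = v ^ M * (2 * M).factorial := by
  induction M with
  | zero => simp [gaussianMoment]
  | succ M ih =>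
    rw [mul_add_one, gaussianMoment, Nat.factorial_succ, Nat.factorial_succ, Nat.factorial_succ]
    push_cast
    calc v * (2 * M + 1) * gaussianMoment v (2 * M) * (2 ^ (M + 1) * ((M + 1) * M.factorial))
        = v * (2 * M + 1) * 2 * (M + 1) * (gaussianMoment v (2 * M) * (2 ^ M * M.factorial)) := by
          ring
      _ = v ^ (M + 1) * ((2 * M + 1 + 1) * ((2 * M + 1) * (2 * M).factorial)) := by
          rw [ih]
          ring

lemma gaussianMoment_of_odd {R : Type*} [CommSemiring R] (v : R) {n : ℕ} (hn : Odd n) :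
    gaussianMoment v n = 0 := by
  obtain ⟨M, rfl⟩ := hn
  induction M with
  | zero => rfl
  | succ M ih => exact mul_eq_zero_of_right _ ih

lemma gaussianMoment_nonneg {v : ℝ} (hv : 0 ≤ v) (n : ℕ) : 0 ≤ gaussianMoment v n := by
  induction n using Nat.twoStepInduction with
  | zero => exact zero_le_one
  | one => exact le_rfl
  | more n ih _ => exact mul_nonneg (by positivity) ih

lemma gaussianMoment_pos_of_even {v : ℝ} (hv : 0 < v) {n : ℕ} (hn : Even n) :
    0 < gaussianMoment v n := by
  obtain ⟨M, rfl⟩ := even_iff_exists_two_mul.1 hn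
  refine pos_of_mul_pos_left ?_ (show 0 ≤ (2 ^ M * M.factorial : ℝ) by positivity)
  rw [gaussianMoment_two_mul_mul]
  positivity

lemma hasSum_gaussianMoment (v c : ℝ) :
    HasSum (fun n : ℕ ↦ c ^ n * gaussianMoment v n / n.factorial) (exp (c ^ 2 * v / 2)) := by
  have even_injective : Function.Injective fun M : ℕ ↦ 2 * M := fun _ _ h ↦ by simpa using h
  have even_terms : (fun n : ℕ ↦ c ^ n * gaussianMoment v n / n.factorial) ∘ (fun M ↦ 2 * M) =
      fun M ↦ (c ^ 2 * v / 2) ^ M / M.factorial := by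
    ext M
    rw [Function.comp_apply, div_eq_div_iff (by positivity) (by positivity), div_pow, mul_pow,
      pow_mul, mul_assoc, div_mul_eq_mul_div, mul_assoc, ← gaussianMoment_two_mul_mul]
    field_simp
  rw [← even_injective.hasSum_iff, even_terms, Real.exp_eq_exp_ℝ]
  · exact NormedSpace.expSeries_div_hasSum_exp _
  · intro n hn
    rw [gaussianMoment_of_odd v, mul_zero, zero_div]
    rw [← Nat.not_even_iff_odd, even_iff_exists_two_mul]
    exact fun ⟨M, hM⟩ ↦ hn ⟨M, hM.symm⟩

lemma card_Omega {N : ℕ} (hN : Even N) : (Nat.card (Omega N) : ℝ) = gaussianMoment 1 (3 * N) := by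
  obtain ⟨M, hM⟩ := even_iff_exists_two_mul.1 (hN.mul_left 3)
  have card_mul : (Nat.card (Omega N) : ℝ) * (2 ^ M * M.factorial) = (2 * M).factorial :=
    mod_cast card_fixedPointFree_involutions_mul ((Fintype.card_fin _).trans hM)
  refine mul_right_cancel₀ (b := (2 ^ M * M.factorial : ℝ)) (by positivity) ?_
  rw [card_mul, hM, gaussianMoment_two_mul_mul, one_pow, one_mul]

end GaussianMoments

section HalfEdgeWeights

/-- The relative weight, in the expansion of `(X₁³ + 3 X₁ X₂ + 3 X₁ + 2 X₃) ^ N`, of choosing `s`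
factors `X₃` and `p` factors `X₁ X₂` or `X₁`. -/
noncomputable def defectWeight (N s p : ℕ) : ℝ :=
  N.descFactorial (s + p) * gaussianMoment (1 : ℝ) (3 * (N - (s + p)) + p) /
    gaussianMoment (1 : ℝ) (3 * N)

lemma defectWeight_zero_zero {N : ℕ} (hN : Even N) : defectWeight N 0 0 = 1 := by
  simpa [defectWeight] using (gaussianMoment_pos_of_even one_pos (hN.mul_left 3)).ne'

lemma defectWeight_one {N : ℕ} (hN : Even N) (p : ℕ) : defectWeight N 1 p = 0 := by
  rcases le_or_gt (1 + p) N with h | h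
  · rw [defectWeight, gaussianMoment_of_odd, mul_zero, zero_div]
    grind
  · rw [defectWeight, Nat.descFactorial_of_lt h, Nat.cast_zero, zero_mul, zero_div]

/-- The truncated subtraction is harmless, both sides being zero when `N ≤ s + p`. -/
lemma defectWeight_succ_right (N s p : ℕ) :
    defectWeight N s (p + 1) =
      (N - (s + p) : ℕ) / (3 * (N - (s + p) : ℕ) + p - 1) * defectWeight N s p := by
  rw [defectWeight, defectWeight, ← add_assoc, ← Nat.sub_sub N (s + p) 1,
    Nat.descFactorial_succ]
  rcases (N - (s + p)).eq_zero_or_pos with h | h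
  · simp [h]
  obtain ⟨m, hm⟩ := Nat.exists_eq_add_of_le' h
  have moment_eq : gaussianMoment (1 : ℝ) (3 * (m + 1) + p) =
      (3 * m + p + 2) * gaussianMoment 1 (3 * m + (p + 1)) := by
    rw [show 3 * (m + 1) + p = (3 * m + (p + 1)) + 2 by ring, gaussianMoment]
    push_cast
    ring
  have denominator_eq : (3 * (m + 1) + p - 1 : ℝ) = 3 * m + p + 2 := by ring
  rw [hm, moment_eq, Nat.add_sub_cancel]
  push_cast
  rw [denominator_eq]
  field_simp

lemma defectWeight_add_two_left (N s p : ℕ) :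
    defectWeight N (s + 2) p = (N - (s + p) : ℕ) * ((N - (s + p) : ℕ) - 1) /
      ((3 * (N - (s + p) : ℕ) + p - 1) * (3 * (N - (s + p) : ℕ) + p - 3) *
        (3 * (N - (s + p) : ℕ) + p - 5)) * defectWeight N s p := by
  rw [defectWeight, defectWeight, add_right_comm, ← Nat.sub_sub N (s + p) 2,
    Nat.descFactorial_succ, Nat.descFactorial_succ, ← Nat.sub_sub N (s + p) 1]
  obtain h | h | ⟨m, hm⟩ : N - (s + p) = 0 ∨ N - (s + p) = 1 ∨ ∃ m, N - (s + p) = m + 2 := by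
    rcases N - (s + p) with _ | _ | m <;> simp
  · simp [h]
  · simp [h]
  have moment_eq : gaussianMoment (1 : ℝ) (3 * (m + 2) + p) =
      (3 * m + p + 5) * (3 * m + p + 3) * (3 * m + p + 1) * gaussianMoment 1 (3 * m + p) := by
    rw [show 3 * (m + 2) + p = (3 * m + p) + 2 + 2 + 2 by ring, gaussianMoment, gaussianMoment,
      gaussianMoment]
    push_cast
    ring
  have denominator_eq : (3 * (m + 2) + p - 1 : ℝ) * (3 * (m + 2) + p - 3) * (3 * (m + 2) + p - 5) =
      (3 * m + p + 5) * (3 * m + p + 3) * (3 * m + p + 1) := by ring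
  rw [hm, moment_eq, Nat.add_sub_cancel]
  push_cast
  rw [denominator_eq]
  have : (3 * m + p + 5 : ℝ) * (3 * m + p + 3) * (3 * m + p + 1) ≠ 0 := by positivity
  field_simp
  ring

lemma div_three_mul_add_sub_one_mem_Icc (m p : ℕ) :
    (m / (3 * m + p - 1) : ℝ) ∈ Set.Icc 0 1 := by
  rcases m.eq_zero_or_pos with rfl | hm
  · simp
  have : (1 : ℝ) ≤ m := mod_cast hm
  have : (0 : ℝ) ≤ p := p.cast_nonneg
  exact ⟨div_nonneg (by linarith) (by linarith), div_le_one_of_le₀ (by linarith) (by linarith)⟩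

lemma mul_sub_one_div_mem_Icc (m p : ℕ) :
    (m * (m - 1) / ((3 * m + p - 1) * (3 * m + p - 3) * (3 * m + p - 5)) : ℝ) ∈
      Set.Icc 0 (m : ℝ)⁻¹ := by
  obtain rfl | rfl | hm : m = 0 ∨ m = 1 ∨ 2 ≤ m := by lia
  · simp
  · simp
  have : (2 : ℝ) ≤ m := mod_cast hm
  have : (0 : ℝ) ≤ p := p.cast_nonneg
  have denominator_pos :
      (0 : ℝ) < (3 * m + p - 1) * (3 * m + p - 3) * (3 * m + p - 5) :=
    mul_pos (mul_pos (by linarith) (by linarith)) (by linarith)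
  refine ⟨div_nonneg (mul_nonneg (by linarith) (by linarith)) denominator_pos.le, ?_⟩
  rw [← one_div, div_le_div_iff₀ denominator_pos (by linarith), one_mul, mul_right_comm]
  exact mul_le_mul (mul_le_mul (by linarith) (by linarith) (by linarith) (by linarith))
    (by linarith) (by linarith) (mul_nonneg (by linarith) (by linarith))

lemma defectWeight_mem_Icc {N : ℕ} (hN : Even N) (s p : ℕ) : defectWeight N s p ∈ Set.Icc 0 1 := by
  induction s using Nat.twoStepInduction with
  | zero =>
    induction p with
    | zero => simp [defectWeight_zero_zero hN]
    | succ p ih =>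
      rw [defectWeight_succ_right]
      exact unitInterval.mul_mem (div_three_mul_add_sub_one_mem_Icc _ p) ih
  | one => simp [defectWeight_one hN]
  | more s ih _ =>
    rw [defectWeight_add_two_left]
    have factor_mem := mul_sub_one_div_mem_Icc (N - (s + p)) p
    exact unitInterval.mul_mem ⟨factor_mem.1, factor_mem.2.trans (Nat.cast_inv_le_one _)⟩ ih

lemma tendsto_defectWeight (s p : ℕ) :
    Tendsto (fun N ↦ defectWeight N s p) (atTop ⊓ 𝓟 {N | Even N})
      (𝓝 (0 ^ s * 3⁻¹ ^ p)) := by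
  have eventually_even : ∀ᶠ N : ℕ in atTop ⊓ 𝓟 {N | Even N}, Even N :=
    eventually_inf_principal.2 (Eventually.of_forall fun _ h ↦ h)
  have tendsto_remaining (c : ℕ) :
      Tendsto (fun N : ℕ ↦ N - c) (atTop ⊓ 𝓟 {N | Even N}) atTop :=
    (tendsto_sub_atTop_nat c).mono_left inf_le_left
  induction s using Nat.twoStepInduction with
  | zero =>
    simp only [pow_zero, one_mul]
    induction p with
    | zero =>
      exact tendsto_const_nhds.congr' (eventually_even.mono fun N hN ↦
        (pow_zero _).trans (defectWeight_zero_zero hN).symm)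
    | succ p ih =>
      have ratio_tendsto : Tendsto (fun m : ℕ ↦ (m / (3 * m + p - 1) : ℝ)) atTop (𝓝 3⁻¹) := by
        have := (tendsto_natCast_div_add_atTop ((p - 1) / 3 : ℝ)).const_mul 3⁻¹
        rw [mul_one] at this
        refine this.congr fun m ↦ ?_
        rw [← mul_div_assoc, ← mul_div_mul_left _ (m + (p - 1) / 3 : ℝ) three_ne_zero]
        congr 1 <;> ring
      simp only [defectWeight_succ_right, pow_succ']
      exact (ratio_tendsto.comp (tendsto_remaining _)).mul ih
  | one =>
    simp only [pow_one, zero_mul]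
    exact tendsto_const_nhds.congr' (eventually_even.mono fun N hN ↦ (defectWeight_one hN p).symm)
  | more s ih _ =>
    have ratio_tendsto : Tendsto (fun m : ℕ ↦ (m * (m - 1) /
        ((3 * m + p - 1) * (3 * m + p - 3) * (3 * m + p - 5)) : ℝ)) atTop (𝓝 0) :=
      squeeze_zero (fun m ↦ (mul_sub_one_div_mem_Icc m p).1)
        (fun m ↦ (mul_sub_one_div_mem_Icc m p).2) tendsto_inv_atTop_nhds_zero_nat
    simp only [defectWeight_add_two_left]
    simpa using (ratio_tendsto.comp (tendsto_remaining _)).mul ih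

end HalfEdgeWeights

section CubicMultigraphs

lemma add_pow_eq_sum_descFactorial {A : Type*} [CommSemiring A] [Algebra ℝ A] (x y : A) {n N : ℕ}
    (hn : n ≤ N) : (x + y) ^ n = ∑ k ∈ Finset.range (N + 1),
      (n.descFactorial k / k.factorial : ℝ) • (y ^ k * x ^ (n - k)) := by
  have coeff_eq (k : ℕ) : (n.descFactorial k / k.factorial : ℝ) = n.choose k := by
    rw [Nat.descFactorial_eq_factorial_mul_choose, Nat.cast_mul,
      mul_div_cancel_left₀ _ (by positivity)]
  rw [add_comm, add_pow]
  simp only [coeff_eq, Nat.cast_smul_eq_nsmul, nsmul_eq_mul, mul_comm (_ * _)]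
  refine Finset.sum_subset (Finset.range_subset_range.2 (by lia)) fun k _ hk ↦ ?_
  rw [Nat.choose_eq_zero_of_lt (by simpa using hk), Nat.cast_zero, zero_mul]

lemma add_add_add_pow_eq_sum_descFactorial {A : Type*} [CommSemiring A] [Algebra ℝ A] (w x y z : A)
    (N : ℕ) : (w + x + y + z) ^ N =
      ∑ t ∈ Finset.range (N + 1) ×ˢ Finset.range (N + 1) ×ˢ Finset.range (N + 1),
        (N.descFactorial (t.1 + (t.2.1 + t.2.2)) /
            (t.1.factorial * t.2.1.factorial * t.2.2.factorial) : ℝ) •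
          (z ^ t.1 * y ^ t.2.1 * x ^ t.2.2 * w ^ (N - (t.1 + (t.2.1 + t.2.2)))) := by
  have descFactorial_mul (n k l : ℕ) :
      (n.descFactorial k * (n - k).descFactorial l : ℝ) = n.descFactorial (k + l) := by
    rw [← Nat.descFactorial_mul_descFactorial (Nat.le_add_right k l), Nat.add_sub_cancel_left]
    push_cast
    ring
  simp only [Finset.sum_product]
  rw [add_pow_eq_sum_descFactorial _ _ le_rfl]
  refine Finset.sum_congr rfl fun s _ ↦ ?_
  rw [add_pow_eq_sum_descFactorial _ _ (Nat.sub_le N s), Finset.mul_sum, Finset.smul_sum]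
  refine Finset.sum_congr rfl fun i _ ↦ ?_
  rw [add_pow_eq_sum_descFactorial _ _ ((Nat.sub_le _ i).trans (Nat.sub_le N s)), Finset.mul_sum,
    Finset.smul_sum, Finset.mul_sum, Finset.smul_sum]
  refine Finset.sum_congr rfl fun j _ ↦ ?_
  rw [← descFactorial_mul, ← descFactorial_mul, Nat.sub_sub, Nat.sub_sub, add_assoc]
  simp only [mul_smul_comm, smul_smul]
  congr 1
  · field_simp
  · ring

open MvPolynomial in
lemma six_smul_vertexPolynomial_three : (6 : ℝ) • vertexPolynomial 3 =
    X 1 ^ 3 + (3 : ℝ) • X 1 + (3 : ℝ) • (X 1 * X 2) + (2 : ℝ) • X 3 := by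
  have f_one : vertexPolynomial 1 = X 1 := by
    simpa [vertexPolynomial_zero, vertexPolynomial_of_neg] using
      mul_vertexPolynomial (n := 1) (K := 1) (by simp)
  have f_two : 2 * vertexPolynomial 2 = X 1 ^ 2 + 1 + X 2 := by
    simpa [Finset.sum_Icc_succ_top, vertexPolynomial_zero, vertexPolynomial_of_neg, f_one, sq]
      using mul_vertexPolynomial (n := 2) (K := 2) (by simp)
  have f_three : 3 * vertexPolynomial 3 = X 1 * vertexPolynomial 2 + X 1 + X 2 * X 1 + X 3 := by
    simpa [Finset.sum_Icc_succ_top, vertexPolynomial_zero, vertexPolynomial_of_neg, f_one]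
      using mul_vertexPolynomial (n := 3) (K := 3) (by simp)
  simp only [ofNat_smul_eq_nsmul, nsmul_eq_mul]
  push_cast
  linear_combination 2 * f_three + X 1 * f_two

lemma gaussianExpectation_monomial_one_two_three (a i s : ℕ) :
    gaussianExpectation (Nat.cast : ℕ → ℝ) (MvPolynomial.X 1 ^ a * MvPolynomial.X 2 ^ i *
      MvPolynomial.X 3 ^ s) = gaussianMoment 1 a * gaussianMoment 2 i * gaussianMoment 3 s := by
  have := gaussianExpectation_prod_X_pow (Nat.cast : ℕ → ℝ) {1, 2, 3} fun | 1 => a | 2 => i | _ => s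
  simpa [mul_assoc] using this

lemma hasSum_mul_of_nonneg {ι κ : Type*} {f : ι → ℝ} {g : κ → ℝ} {a b : ℝ} (hf : HasSum f a)
    (hg : HasSum g b) (f_nonneg : 0 ≤ f) (g_nonneg : 0 ≤ g) :
    HasSum (fun t : ι × κ ↦ f t.1 * g t.2) (a * b) :=
  hf.mul hg (hf.summable.mul_of_nonneg hg.summable f_nonneg g_nonneg)

/-- The coefficient accompanying `defectWeight N s (i + j)` when `s` factors `2 X₃`, `i` factors
`3 X₁ X₂` and `j` factors `3 X₁` are chosen; the index is `(s, i, j)`. -/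
noncomputable def defectCoeff (t : ℕ × ℕ × ℕ) : ℝ :=
  2 ^ t.1 * gaussianMoment 3 t.1 / t.1.factorial *
    (3 ^ t.2.1 * gaussianMoment 2 t.2.1 / t.2.1.factorial * (3 ^ t.2.2 / t.2.2.factorial))

lemma defectCoeff_nonneg (t : ℕ × ℕ × ℕ) : 0 ≤ defectCoeff t := by
  have := gaussianMoment_nonneg (zero_le_three (α := ℝ)) t.1
  have := gaussianMoment_nonneg (zero_le_two (α := ℝ)) t.2.1
  unfold defectCoeff
  positivity

lemma hasSum_defectCoeff {a b : ℝ} (ha : 0 ≤ a) (hb : 0 ≤ b) :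
    HasSum (fun t : ℕ × ℕ × ℕ ↦ a ^ t.1 * b ^ (t.2.1 + t.2.2) * defectCoeff t)
      (exp ((a * 2) ^ 2 * 3 / 2) * (exp ((b * 3) ^ 2 * 2 / 2) * exp (b * 3))) := by
  have terms_nonneg {v c : ℝ} (hv : 0 ≤ v) (hc : 0 ≤ c) (n : ℕ) :
      0 ≤ c ^ n * gaussianMoment v n / n.factorial := by
    have := gaussianMoment_nonneg hv n
    positivity
  have hasSum_exp : HasSum (fun j : ℕ ↦ (b * 3) ^ j / j.factorial) (exp (b * 3)) := by
    rw [Real.exp_eq_exp_ℝ]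
    exact NormedSpace.expSeries_div_hasSum_exp _
  have hasSum_X₁_X₂ := hasSum_mul_of_nonneg (hasSum_gaussianMoment 2 (b * 3)) hasSum_exp
    (terms_nonneg zero_le_two (by positivity)) fun j ↦ by positivity
  have hasSum_X₁_X₂_X₃ := hasSum_mul_of_nonneg (hasSum_gaussianMoment 3 (a * 2)) hasSum_X₁_X₂
    (terms_nonneg zero_le_three (by positivity)) fun t ↦
      mul_nonneg (terms_nonneg zero_le_two (by positivity) t.1) (by positivity)
  refine hasSum_X₁_X₂_X₃.congr_fun fun t ↦ ?_
  rw [defectCoeff, mul_pow, mul_pow, mul_pow, pow_add]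
  ring

open MvPolynomial in
lemma six_pow_mul_multigraphCount_three (N : ℕ) :
    6 ^ N * (multigraphCount (fun _ : Fin N ↦ 3) : ℝ) =
      ∑ t ∈ Finset.range (N + 1) ×ˢ Finset.range (N + 1) ×ˢ Finset.range (N + 1),
        N.descFactorial (t.1 + (t.2.1 + t.2.2)) *
          gaussianMoment 1 (3 * (N - (t.1 + (t.2.1 + t.2.2))) + (t.2.1 + t.2.2)) *
            defectCoeff t := by
  rw [multigraphCount_eq_gaussianExpectation, degreePolynomial, Fin.prod_const, ← smul_eq_mul,
    ← map_smul, ← smul_pow, six_smul_vertexPolynomial_three, add_add_add_pow_eq_sum_descFactorial,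
    map_sum]
  refine Finset.sum_congr rfl fun ⟨s, i, j⟩ _ ↦ ?_
  have collect (m : ℕ) : ((2 : ℝ) • X 3) ^ s * ((3 : ℝ) • (X 1 * X 2)) ^ i * ((3 : ℝ) • X 1) ^ j *
      (X 1 ^ 3) ^ m = (2 ^ s * 3 ^ i * 3 ^ j : ℝ) •
        (X 1 ^ (3 * m + (i + j)) * X 2 ^ i * X 3 ^ s : MvPolynomial ℕ ℝ) := by
    simp only [smul_pow, smul_mul_assoc, mul_smul_comm, smul_smul]
    congr 1 <;> ring
  rw [collect, smul_smul, map_smul, gaussianExpectation_monomial_one_two_three, smul_eq_mul,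
    defectCoeff]
  field_simp

lemma hasSum_defectWeight_mul_defectCoeff (N : ℕ) :
    HasSum (fun t : ℕ × ℕ × ℕ ↦ defectWeight N t.1 (t.2.1 + t.2.2) * defectCoeff t)
      (6 ^ N * multigraphCount (fun _ : Fin N ↦ 3) / gaussianMoment 1 (3 * N)) := by
  simp only [six_pow_mul_multigraphCount_three, Finset.sum_div, defectWeight, div_mul_eq_mul_div]
  refine hasSum_sum_of_ne_finset_zero fun t ht ↦ ?_
  have too_many : N < t.1 + (t.2.1 + t.2.2) := by
    simp only [Finset.mem_product, Finset.mem_range] at ht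
    lia
  rw [Nat.descFactorial_of_lt too_many, Nat.cast_zero, zero_mul, zero_mul, zero_div]

theorem tendsto_six_pow_mul_multigraphCount_div :
    Tendsto (fun N ↦ 6 ^ N * multigraphCount (fun _ : Fin N ↦ 3) / gaussianMoment (1 : ℝ) (3 * N))
      (atTop ⊓ 𝓟 {N | Even N}) (𝓝 (exp 2)) := by
  have summable_defectCoeff : Summable defectCoeff := by
    simpa using (hasSum_defectCoeff zero_le_one zero_le_one).summable
  have limit_sum : ∑' t : ℕ × ℕ × ℕ, 0 ^ t.1 * 3⁻¹ ^ (t.2.1 + t.2.2) * defectCoeff t = exp 2 := by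
    rw [(hasSum_defectCoeff le_rfl (by norm_num)).tsum_eq, ← exp_add, ← exp_add]
    norm_num
  rw [← limit_sum]
  simp only [← (hasSum_defectWeight_mul_defectCoeff _).tsum_eq]
  refine tendsto_tsum_of_dominated_convergence summable_defectCoeff
    (fun t ↦ (tendsto_defectWeight _ _).mul_const _) ?_
  refine eventually_inf_principal.2 (Eventually.of_forall fun N hN t ↦ ?_)
  obtain ⟨weight_nonneg, weight_le_one⟩ := defectWeight_mem_Icc hN t.1 (t.2.1 + t.2.2)
  rw [Real.norm_of_nonneg (mul_nonneg weight_nonneg (defectCoeff_nonneg t))]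
  exact mul_le_of_le_one_left (defectCoeff_nonneg t) weight_le_one

end CubicMultigraphs

/-- Theorem: `|Ω_N| = (3N)!/(2^{3N/2} (3N/2)!)` and the number of labelled cubic
multigraphs on `Fin N` is asymptotic to `e² |Ω_N| / 6^N` as `N → ∞` through even `N`. -/
theorem labelled_cubic_multigraph_count :
    (∀ N : ℕ, Even N →
      Nat.card (Omega N) =
        Nat.factorial (3 * N) / (2 ^ (3 * N / 2) * Nat.factorial (3 * N / 2))) ∧
    Tendsto
      (fun N : ℕ =>
        (Nat.card {m : Fin N → Fin N → ℕ // IsCubic m} : ℝ) * 6 ^ N /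
          (Real.exp 2 * (Nat.card (Omega N) : ℝ)))
      (atTop ⊓ 𝓟 {N : ℕ | Even N}) (𝓝 1) := by
  refine ⟨fun N hN ↦ ?_, ?_⟩
  · refine Nat.eq_div_of_mul_eq_left (by positivity) ?_
    have half_edges : 3 * N = 2 * (3 * N / 2) := (Nat.two_mul_div_two_of_even (hN.mul_left 3)).symm
    have := card_fixedPointFree_involutions_mul ((Fintype.card_fin _).trans half_edges)
    rwa [← half_edges] at this
  · have normalised := tendsto_six_pow_mul_multigraphCount_div.div_const (exp 2)
    rw [div_self (exp_ne_zero 2)] at normalised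
    refine normalised.congr' (eventually_inf_principal.2 (Eventually.of_forall fun N hN ↦ ?_))
    simp only [card_isCubic, card_Omega hN]
    field_simp
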